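/- Exponential concentration of the signed occurrence profile: fix a positive rational c, set λ = 3c, and let n range over positive integers with c·n ∈ ℕ. Fix integers 0 ≤ p ≤ x and a real ε > 0. Then there exist constants C > 0 and δ > 0 such that for every such n, the probability that a uniformly random formula F : Fin (c·n) → (Fin n × Bool)³ satisfies |ω_{x,p}(F) − κ_{x,p}| ≥ ε is at most C·√n·e^{−δ·n}. -/

import Mathlib

open Filter

/-- `κ_{x,p} = 2^{-x} (x choose p) e^{-λ} λ^x / x!`. -/
noncomputable def kappa (lam : ℝ) (x p : ℕ) : ℝ :=
  (2 : ℝ) ^ (-(x : ℝ)) * (Nat.choose x p : ℝ) *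
    (Real.exp (-lam) * lam ^ x / (Nat.factorial x : ℝ))

/-- Number of occurrences of the variable `v` in the formula `F`. -/
noncomputable def numOccs {n m : ℕ} (F : Fin m → Fin 3 → Fin n × Bool) (v : Fin n) : ℕ :=
  Nat.card {ij : Fin m × Fin 3 // (F ij.1 ij.2).1 = v}

/-- Number of positive occurrences of the variable `v` in the formula `F`. -/
noncomputable def numPosOccs {n m : ℕ} (F : Fin m → Fin 3 → Fin n × Bool) (v : Fin n) : ℕ :=
  Nat.card {ij : Fin m × Fin 3 // F ij.1 ij.2 = (v, true)}

/-- `ω_{x,p}(F)`: the proportion (among the `n` variables) of variables having `x`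
occurrences in `F`, `p` of them positive. -/
noncomputable def omegaProp (n m x p : ℕ) (F : Fin m → Fin 3 → Fin n × Bool) : ℝ :=
  (Nat.card {v : Fin n // numOccs F v = x ∧ numPosOccs F v = p} : ℝ) / (n : ℝ)

open Finset in
lemma sum_cnt {ι α : Type} [Fintype ι] [Fintype α] [DecidableEq ι] [DecidableEq α] (W : (α → ℕ) → ℝ) :
    ∑ G : ι → α, W (fun a => #{i | G i = a}) =
      ∑ k ∈ piAntidiag (univ : Finset α) (Fintype.card ι), (Nat.multinomial univ k : ℝ) * W k := by
  let L : MvPolynomial α ℝ →ₗ[ℝ] ℝ :=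
    (MvPolynomial.basisMonomials α ℝ).constr ℝ (fun k => W k)
  have hL : ∀ k : α → ℕ, L (∏ a, MvPolynomial.X a ^ k a) = W k := by
    intro k
    have h1 : (∏ a, MvPolynomial.X a ^ k a : MvPolynomial α ℝ) =
        MvPolynomial.basisMonomials α ℝ (Finsupp.equivFunOnFinite.symm k) := by
      rw [MvPolynomial.coe_basisMonomials]
      simp only []
      rw [MvPolynomial.monomial_eq]
      simp [Finsupp.prod_fintype]
    rw [h1]
    simp only [L, Module.Basis.constr_basis]
    rfl
  have h := congrArg L (Finset.sum_pow_eq_sum_piAntidiag (univ : Finset α)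
    (fun a => (MvPolynomial.X a : MvPolynomial α ℝ)) (Fintype.card ι))
  have h2 : (∑ a, (MvPolynomial.X a : MvPolynomial α ℝ)) ^ (Fintype.card ι) =
      ∑ G : ι → α, ∏ a, MvPolynomial.X a ^ (#{i | G i = a}) := by
    rw [← Finset.card_univ, ← Finset.prod_const, Finset.prod_univ_sum, Fintype.piFinset_univ]
    refine Finset.sum_congr rfl fun G _ => ?_
    rw [← Finset.prod_fiberwise (s := univ) (g := G)]
    refine Finset.prod_congr rfl fun a _ => ?_
    rw [Finset.prod_congr rfl (g := fun _ => MvPolynomial.X a), Finset.prod_const]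
    simp +contextual
  rw [h2, map_sum, map_sum] at h
  simp only [hL] at h
  rw [h]
  refine Finset.sum_congr rfl fun k _ => ?_
  rw [← nsmul_eq_mul, map_nsmul, hL, nsmul_eq_mul]

lemma fact_le (N : ℕ) (hN : 0 < N) :
    (N.factorial : ℝ) ≤ Real.exp 1 * Real.sqrt N * (N / Real.exp 1) ^ N := by
  obtain ⟨k, rfl⟩ : ∃ k, N = k + 1 := ⟨N - 1, by omega⟩
  have h := Stirling.stirlingSeq'_antitone (Nat.zero_le k)
  simp only [Function.comp, Nat.succ_eq_add_one, zero_add, Stirling.stirlingSeq_one] at h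
  rw [Stirling.stirlingSeq, div_le_iff₀ (by positivity)] at h
  refine h.trans (le_of_eq ?_)
  rw [Real.sqrt_mul (by positivity)]
  have : Real.sqrt 2 ≠ 0 := by positivity
  push_cast
  field_simp

/-- box sum -/
lemma box_sum (p q M : ℕ) (hp : p < M) (hq : q < M) (z s : ℝ) (hz : 0 < z) :
    ∑ ab ∈ Finset.range M ×ˢ Finset.range M,
      (if ab.1 = p ∧ ab.2 = q then s else 1) *
        (z ^ ab.1 / (ab.1.factorial : ℝ) * (z ^ ab.2 / (ab.2.factorial : ℝ))) ≤
      Real.exp (2 * z) + (s - 1) * (z ^ (p + q) / (p.factorial * q.factorial)) := by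
  have h1 : ∀ ab : ℕ × ℕ, (if ab.1 = p ∧ ab.2 = q then s else 1) *
        (z ^ ab.1 / (ab.1.factorial : ℝ) * (z ^ ab.2 / (ab.2.factorial : ℝ))) =
      z ^ ab.1 / (ab.1.factorial : ℝ) * (z ^ ab.2 / (ab.2.factorial : ℝ)) +
      (if (p, q) = ab then (s - 1) * (z ^ (p + q) / (p.factorial * q.factorial)) else 0) := by
    rintro ⟨a, b⟩
    by_cases h : a = p ∧ b = q
    · obtain ⟨rfl, rfl⟩ := h
      simp only [and_self, if_true]
      ring
    · rw [if_neg h, if_neg (by simp only [Prod.mk.injEq]; tauto)]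
      ring
  rw [Finset.sum_congr rfl fun ab _ => h1 ab, Finset.sum_add_distrib, Finset.sum_ite_eq,
    if_pos (by simp [hp, hq])]
  have h2 := Real.sum_le_exp_of_nonneg hz.le M
  rw [Finset.sum_product]
  simp only []
  rw [← Finset.sum_mul_sum, two_mul, Real.exp_add]
  have h3 : 0 ≤ ∑ i ∈ Finset.range M, z ^ i / (i.factorial : ℝ) :=
    Finset.sum_nonneg fun i _ => by positivity
  gcongr

open Finset in
lemma mgf_aux (n N p q : ℕ) (z s : ℝ) (hz : 0 < z) (hs : 0 < s) :
    ∑ k ∈ piAntidiag (univ : Finset (Fin n × Bool)) N, (Nat.multinomial univ k : ℝ) *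
        ∏ v, (if k (v, true) = p ∧ k (v, false) = q then s else 1) ≤
      N.factorial / z ^ N *
        (Real.exp (2 * z) + (s - 1) * (z ^ (p + q) / (p.factorial * q.factorial))) ^ n := by
  set f : ℕ × ℕ → ℝ := fun ab => (if ab.1 = p ∧ ab.2 = q then s else 1) *
        (z ^ ab.1 / (ab.1.factorial : ℝ) * (z ^ ab.2 / (ab.2.factorial : ℝ))) with hf
  have hf0 : ∀ ab, 0 ≤ f ab := by
    intro ab
    simp only [hf]
    have : 0 ≤ (if ab.1 = p ∧ ab.2 = q then s else 1) := by split_ifs <;> linarith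
    positivity
  let Φ : (Fin n × Bool → ℕ) → (Fin n → ℕ × ℕ) := fun k v => (k (v, true), k (v, false))
  have hΦ : Function.Injective Φ := by
    intro k l h
    ext ⟨v, b⟩
    have := congrFun h v
    simp only [Φ, Prod.mk.injEq] at this
    cases b
    · exact this.2
    · exact this.1
  set M := N + p + q + 1 with hM
  have hterm : ∀ k ∈ piAntidiag (univ : Finset (Fin n × Bool)) N,
      (Nat.multinomial univ k : ℝ) *
        ∏ v, (if k (v, true) = p ∧ k (v, false) = q then s else 1) =
      N.factorial / z ^ N * ∏ v, f (Φ k v) := by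
    intro k hk
    have hsum : ∑ a, k a = N := (mem_piAntidiag.1 hk).1
    have h1 : (∏ a, ((k a).factorial : ℝ)) * Nat.multinomial univ k = N.factorial := by
      have := Nat.multinomial_spec univ k
      rw [hsum] at this
      exact_mod_cast this
    have h2 : z ^ N = ∏ a, z ^ k a := by rw [← hsum, prod_pow_eq_pow_sum]
    have h3 : (∏ v, f (Φ k v)) = (∏ v, (if k (v, true) = p ∧ k (v, false) = q then s else 1)) *
        ((∏ a, z ^ k a) / (∏ a, ((k a).factorial : ℝ))) := by
      rw [← prod_div_distrib, Fintype.prod_prod_type, ← prod_mul_distrib]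
      refine prod_congr rfl fun v _ => ?_
      simp [hf, Φ, div_mul_div_comm]
    have h4 : (∏ a, ((k a).factorial : ℝ)) ≠ 0 :=
      prod_ne_zero_iff.2 fun a _ => by positivity
    have h5 : z ^ N ≠ 0 := by positivity
    rw [h3, ← h2, ← h1]
    field_simp
  rw [sum_congr rfl hterm, ← mul_sum]
  refine mul_le_mul_of_nonneg_left ?_ (by positivity)
  rw [← sum_image (f := fun h => ∏ v, f (h v)) (g := Φ) (fun a _ b _ h => hΦ h)]
  calc _ ≤ ∑ h ∈ Fintype.piFinset (fun _ : Fin n => range M ×ˢ range M), ∏ v, f (h v) := by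
        refine sum_le_sum_of_subset_of_nonneg ?_ fun h _ _ => prod_nonneg fun v _ => hf0 _
        intro h hh
        obtain ⟨k, hk, rfl⟩ := mem_image.1 hh
        have hsum : ∑ a, k a = N := (mem_piAntidiag.1 hk).1
        have hle : ∀ a, k a ≤ N := fun a => hsum ▸ single_le_sum (f := k) (by simp) (mem_univ a)
        simp only [Fintype.mem_piFinset, mem_product, mem_range, Φ]
        intro v
        have h1 := hle (v, true)
        have h2 := hle (v, false)
        omega
    _ = (∑ ab ∈ range M ×ˢ range M, f ab) ^ n := by
        rw [← prod_univ_sum]; simp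
    _ ≤ _ := by
        refine pow_le_pow_left₀ (sum_nonneg fun _ _ => hf0 _) ?_ n
        exact box_sum p q M (by omega) (by omega) z s hz

open Finset in
/-- Number of variables of the given type. -/
lemma mgf (n m x p : ℕ) (hpx : p ≤ x) (z s : ℝ) (hz : 0 < z) (hs : 0 < s) :
    ∑ F : Fin m → Fin 3 → Fin n × Bool,
        s ^ (Nat.card {v : Fin n // numOccs F v = x ∧ numPosOccs F v = p}) ≤
      (3 * m).factorial / z ^ (3 * m) *
        (Real.exp (2 * z) + (s - 1) * (z ^ x / (p.factorial * (x - p).factorial))) ^ n := by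
  have h := mgf_aux n (3 * m) p (x - p) z s hz hs
  rw [show p + (x - p) = x by omega] at h
  refine le_trans (le_of_eq ?_) h
  have hc : 3 * m = Fintype.card (Fin m × Fin 3) := by simp [mul_comm]
  rw [hc, ← sum_cnt (ι := Fin m × Fin 3)
    (fun k => ∏ v, (if k (v, true) = p ∧ k (v, false) = x - p then s else 1))]
  refine Fintype.sum_equiv (Equiv.curry (Fin m) (Fin 3) (Fin n × Bool)).symm _ _ fun F => ?_
  have hpos : ∀ v, numPosOccs F v =
      #{i : Fin m × Fin 3 | (Equiv.curry (Fin m) (Fin 3) (Fin n × Bool)).symm F i = (v, true)} := by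
    intro v
    rw [numPosOccs, Nat.card_eq_fintype_card, Fintype.card_subtype]
    rfl
  have hocc : ∀ v, numOccs F v =
      #{i : Fin m × Fin 3 | (Equiv.curry (Fin m) (Fin 3) (Fin n × Bool)).symm F i = (v, true)} +
      #{i : Fin m × Fin 3 | (Equiv.curry (Fin m) (Fin 3) (Fin n × Bool)).symm F i = (v, false)} := by
    intro v
    rw [numOccs, Nat.card_eq_fintype_card, Fintype.card_subtype, ← card_union_of_disjoint]
    · congr 1
      ext ⟨i, j⟩
      simp only [mem_filter, mem_univ, true_and, mem_union, Equiv.curry_symm_apply,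
        Function.uncurry]
      rcases h : F i j with ⟨w, b⟩
      cases b <;> simp
    · rw [disjoint_left]
      intro i h1 h2
      simp only [mem_filter, mem_univ, true_and] at h1 h2
      rw [h1] at h2
      simp at h2
  rw [prod_ite, prod_const_one, mul_one, prod_const, Nat.card_eq_fintype_card,
    Fintype.card_subtype]
  congr 2
  ext v
  simp only [mem_filter, mem_univ, true_and]
  rw [hocc, hpos]
  omega

lemma kappa_eq (lam : ℝ) (x p : ℕ) (hpx : p ≤ x) :
    Real.exp lam * kappa lam x p =
      (lam / 2) ^ x / (p.factorial * (x - p).factorial) := by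
  rw [kappa, Nat.cast_choose ℝ hpx, Real.rpow_neg (by norm_num), Real.rpow_natCast, Real.exp_neg,
    div_pow]
  have := Real.exp_pos lam
  have : (p.factorial : ℝ) ≠ 0 := by positivity
  have : ((x - p).factorial : ℝ) ≠ 0 := by positivity
  have : (x.factorial : ℝ) ≠ 0 := by positivity
  field_simp

/-- normalised MGF bound -/
lemma mgf_norm (n m x p : ℕ) (hpx : p ≤ x) (lam s : ℝ) (hlam : 0 < lam) (hn : 0 < n)
    (hs : 0 < s) (hm : (3 * m : ℕ) = lam * n) (hk : kappa lam x p ≤ 1 ) :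
    (∑ F : Fin m → Fin 3 → Fin n × Bool,
        s ^ (Nat.card {v : Fin n // numOccs F v = x ∧ numPosOccs F v = p})) /
        (2 * (n : ℝ)) ^ (3 * m) ≤
      Real.exp 1 * Real.sqrt (lam * n) * Real.exp (n * ((s - 1) * kappa lam x p)) := by
  have h := mgf n m x p hpx (lam / 2) s (by positivity) hs
  rw [← kappa_eq lam x p hpx, show 2 * (lam / 2) = lam by ring] at h
  have hn' : (0 : ℝ) < n := by exact_mod_cast hn
  have hN : 0 < 3 * m := by
    have : (0 : ℝ) < (3 * m : ℕ) := by rw [hm]; positivity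
    exact_mod_cast this
  have hf := fact_le (3 * m) hN
  rw [hm] at hf
  have hk0 : 0 ≤ kappa lam x p := by unfold kappa; positivity
  have hb : Real.exp lam + (s - 1) * (Real.exp lam * kappa lam x p) =
    Real.exp lam * (1 + (s - 1) * kappa lam x p) := by ring
  rw [hb, mul_pow, ← Real.exp_nat_mul] at h
  have hb0 : 0 ≤ 1 + (s - 1) * kappa lam x p := by nlinarith
  have hb1 : (1 + (s - 1) * kappa lam x p) ^ n ≤ Real.exp (n * ((s - 1) * kappa lam x p)) := by
    rw [Real.exp_nat_mul]
    refine pow_le_pow_left₀ hb0 ?_ n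
    linarith [Real.add_one_le_exp ((s - 1) * kappa lam x p)]
  have he : Real.exp (n * lam) = Real.exp 1 ^ (3 * m) := by
    rw [← Real.exp_nat_mul, hm]; ring_nf
  rw [div_le_iff₀ (by positivity)]
  calc _ ≤ _ := h
    _ ≤ (Real.exp 1 * Real.sqrt (lam * n) * (lam * n / Real.exp 1) ^ (3 * m)) /
        (lam / 2) ^ (3 * m) * (Real.exp (n * lam) * Real.exp (n * ((s - 1) * kappa lam x p))) := by
        gcongr
    _ = _ := by
        rw [he, div_pow, div_pow, mul_pow, mul_pow]
        have := Real.exp_pos 1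
        field_simp

lemma kappa_le_one (lam : ℝ) (hlam : 0 < lam) (x p : ℕ) (hpx : p ≤ x) : kappa lam x p ≤ 1 := by
  have h := kappa_eq lam x p hpx
  have h1 := box_sum p (x - p) (x + 1) (by omega) (by omega) (lam / 2) 0 (by positivity)
  rw [show p + (x - p) = x by omega, ← h, show 2 * (lam / 2) = lam by ring] at h1
  have h0 : (0 : ℝ) ≤ ∑ ab ∈ Finset.range (x + 1) ×ˢ Finset.range (x + 1),
      (if ab.1 = p ∧ ab.2 = x - p then (0 : ℝ) else 1) *
        ((lam / 2) ^ ab.1 / (ab.1.factorial : ℝ) * ((lam / 2) ^ ab.2 / (ab.2.factorial : ℝ))) := by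
    refine Finset.sum_nonneg fun ab _ => ?_
    have : (0 : ℝ) ≤ (if ab.1 = p ∧ ab.2 = x - p then (0 : ℝ) else 1) := by split_ifs <;> norm_num
    positivity
  have := Real.exp_pos lam
  have h2 : Real.exp lam * kappa lam x p ≤ Real.exp lam * 1 := by linarith
  exact le_of_mul_le_mul_left h2 this

/-- one-sided pointwise Chernoff ingredient -/
lemma indicator_le (n m x p : ℕ) (hn : 0 < n) (F : Fin m → Fin 3 → Fin n × Bool) (K ε t : ℝ)
    (ht : 0 ≤ t) (h : ε ≤ |omegaProp n m x p F - K|) :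
    1 ≤ Real.exp (-(t * n * (K + ε))) *
        Real.exp t ^ (Nat.card {v : Fin n // numOccs F v = x ∧ numPosOccs F v = p}) +
      Real.exp (t * n * (K - ε)) *
        Real.exp (-t) ^ (Nat.card {v : Fin n // numOccs F v = x ∧ numPosOccs F v = p}) := by
  unfold omegaProp at h
  set X := Nat.card {v : Fin n // numOccs F v = x ∧ numPosOccs F v = p}
  have hn' : (0 : ℝ) < n := by exact_mod_cast hn
  rw [← Real.exp_nat_mul, ← Real.exp_nat_mul, ← Real.exp_add, ← Real.exp_add]
  have hX : (X : ℝ) = n * ((X : ℝ) / n) := by field_simp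
  set w := (X : ℝ) / n
  rw [hX]
  have htn : 0 ≤ t * n := by positivity
  rcases le_abs.1 h with h | h
  · have h1 : 0 ≤ -(t * n * (K + ε)) + n * w * t := by nlinarith
    linarith [Real.one_le_exp h1, Real.exp_pos (t * n * (K - ε) + n * w * -t)]
  · have h1 : 0 ≤ t * n * (K - ε) + n * w * -t := by nlinarith
    linarith [Real.one_le_exp h1, Real.exp_pos (-(t * n * (K + ε)) + n * w * t)]

/-- exponential concentration of the signed occurrence profile.  For a
positive rational `c`, `λ = 3c`, fixed `0 ≤ p ≤ x` and `ε > 0`, there are `C > 0` and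
`δ > 0` such that for every positive integer `n` with `c·n ∈ ℕ`, the probability that a
uniformly random formula with `c·n` clauses on `n` variables has
`|ω_{x,p} − κ_{x,p}| ≥ ε` is at most `C √n e^{−δ n}`. -/
theorem omega_concentration_exponential (c : ℚ) (hc : 0 < c) (x p : ℕ) (hpx : p ≤ x)
    (ε : ℝ) (hε : 0 < ε) :
    ∃ C > (0 : ℝ), ∃ δ > (0 : ℝ), ∀ n : ℕ, 0 < n → (c * (n : ℚ)).den = 1 →
      (Nat.card {F : Fin ((c * (n : ℚ)).num.toNat) → Fin 3 → Fin n × Bool //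
          ε ≤ |omegaProp n ((c * (n : ℚ)).num.toNat) x p F - kappa (3 * (c : ℝ)) x p|} : ℝ) /
        ((2 * (n : ℝ)) ^ (3 * (c * (n : ℚ)).num.toNat))
      ≤ C * Real.sqrt n * Real.exp (-δ * n) := by
  set lam : ℝ := 3 * (c : ℝ) with hlamdef
  have hc' : (0 : ℝ) < c := by exact_mod_cast hc
  have hlam : 0 < lam := by positivity
  set K := kappa lam x p with hK
  have hK1 : K ≤ 1 := kappa_le_one lam hlam x p hpx
  have hK0 : 0 ≤ K := by rw [hK]; unfold kappa; positivity
  obtain ⟨t, ht0, ht1, ht2⟩ : ∃ t : ℝ, 0 < t ∧ t ≤ 1 ∧ t ≤ ε / 2 :=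
    ⟨min 1 (ε / 2), by positivity, min_le_left _ _, min_le_right _ _⟩
  refine ⟨2 * Real.exp 1 * Real.sqrt lam, by positivity, t * ε / 2, by positivity, ?_⟩
  intro n hn hden
  set m := (c * (n : ℚ)).num.toNat with hmdef
  have hn' : (0 : ℝ) < n := by exact_mod_cast hn
  have hm : ((3 * m : ℕ) : ℝ) = lam * n := by
    have h0 : 0 ≤ (c * (n : ℚ)).num := Rat.num_nonneg.2 (by positivity)
    have h1 : ((c * (n : ℚ)).num : ℚ) = c * n := Rat.coe_int_num_of_den_eq_one hden
    have h2 : (m : ℤ) = (c * (n : ℚ)).num := Int.toNat_of_nonneg h0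
    have h3 : (m : ℚ) = c * n := by rw [← h1, ← h2]; simp
    have h4 : (m : ℝ) = c * n := by exact_mod_cast h3
    push_cast
    rw [h4, hlamdef]; ring
  clear_value m
  have hU := mgf_norm n m x p hpx lam (Real.exp t) hlam hn (Real.exp_pos _) hm hK1
  have hD := mgf_norm n m x p hpx lam (Real.exp (-t)) hlam hn (Real.exp_pos _) hm hK1
  rw [← hK] at hU hD
  set SU := ∑ F : Fin m → Fin 3 → Fin n × Bool,
    Real.exp t ^ (Nat.card {v : Fin n // numOccs F v = x ∧ numPosOccs F v = p})
  set SD := ∑ F : Fin m → Fin 3 → Fin n × Bool,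
    Real.exp (-t) ^ (Nat.card {v : Fin n // numOccs F v = x ∧ numPosOccs F v = p})
  have hcard : (Nat.card {F : Fin m → Fin 3 → Fin n × Bool //
      ε ≤ |omegaProp n m x p F - K|} : ℝ) ≤
      Real.exp (-(t * n * (K + ε))) * SU + Real.exp (t * n * (K - ε)) * SD := by
    classical
    rw [Nat.card_eq_fintype_card, Fintype.card_subtype, Finset.card_eq_sum_ones, Nat.cast_sum,
      Finset.mul_sum, Finset.mul_sum, ← Finset.sum_add_distrib, Finset.sum_filter]
    refine Finset.sum_le_sum fun F _ => ?_
    split_ifs with h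
    · simpa using indicator_le n m x p hn F K ε t ht0.le h
    · positivity
  have hu : Real.exp (-(t * n * (K + ε))) * Real.exp (n * ((Real.exp t - 1) * K)) ≤
      Real.exp (-(t * ε / 2) * n) := by
    rw [← Real.exp_add, Real.exp_le_exp]
    have h1 := (abs_le.1 (Real.abs_exp_sub_one_sub_id_le (x := t) (by rw [abs_of_pos ht0]; exact ht1))).2
    have h2 : (Real.exp t - 1) * K ≤ (t + t ^ 2) * K := by gcongr; linarith
    have h3 : t ^ 2 * K ≤ t * ε / 2 := by nlinarith [sq_nonneg t]
    nlinarith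
  have hd : Real.exp (t * n * (K - ε)) * Real.exp (n * ((Real.exp (-t) - 1) * K)) ≤
      Real.exp (-(t * ε / 2) * n) := by
    rw [← Real.exp_add, Real.exp_le_exp]
    have h1 := (abs_le.1 (Real.abs_exp_sub_one_sub_id_le (x := -t)
      (by rw [abs_neg, abs_of_pos ht0]; exact ht1))).2
    have h2 : (Real.exp (-t) - 1) * K ≤ (-t + t ^ 2) * K := by gcongr; linarith
    have h3 : t ^ 2 * K ≤ t * ε / 2 := by nlinarith [sq_nonneg t]
    nlinarith
  set A := Real.exp 1 * Real.sqrt (lam * n) with hA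
  have hA0 : 0 ≤ A := by positivity
  calc _ ≤ (Real.exp (-(t * n * (K + ε))) * SU + Real.exp (t * n * (K - ε)) * SD) /
        (2 * (n : ℝ)) ^ (3 * m) := by gcongr
    _ = Real.exp (-(t * n * (K + ε))) * (SU / (2 * (n : ℝ)) ^ (3 * m)) +
        Real.exp (t * n * (K - ε)) * (SD / (2 * (n : ℝ)) ^ (3 * m)) := by ring
    _ ≤ Real.exp (-(t * n * (K + ε))) * (A * Real.exp (n * ((Real.exp t - 1) * K))) +
        Real.exp (t * n * (K - ε)) * (A * Real.exp (n * ((Real.exp (-t) - 1) * K))) := by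
        gcongr
    _ = A * (Real.exp (-(t * n * (K + ε))) * Real.exp (n * ((Real.exp t - 1) * K))) +
        A * (Real.exp (t * n * (K - ε)) * Real.exp (n * ((Real.exp (-t) - 1) * K))) := by ring
    _ ≤ A * Real.exp (-(t * ε / 2) * n) + A * Real.exp (-(t * ε / 2) * n) := by gcongr
    _ = _ := by
        rw [hA, Real.sqrt_mul hlam.le]; ring
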